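/- (Key lemma for the CIU theorem) For all n ≥ 0, all worlds w, closed frame stacks S, S', types τ, τ', closed expressions e, e' and states s: if ∅ ⊢_w S (≅*)^ S' : τ → τ' (compatible refinement of the Howe relation, extended to frame stacks), ∅ ⊢_w e ≅* e' : τ, atom(s) = w, and ⟨s, S, e⟩↓ⁿ, then ⟨s, S', e'⟩↓. -/

import Mathlib

/-!
The argument is Howe's method, by induction on the length `n` of the terminating computation.

A derivation of `Howe e e'` ends with a compatible refinement step `e ≅*^ b` followed by a
contextual equivalence `b ≅° e'` (`Howe.elim`). Since `S'` is a well-typed closed stack over the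
world, that equivalence can be applied at the stack `S'`, so it suffices that `⟨s, S', b⟩`
terminates. Now `b` has the same outermost form as `e`, and the first transition of `⟨s, S, e⟩`
is matched from `⟨s, S', b⟩`. When the transition inspects a value `v`, the corresponding part
`v'` of `b` is only Howe-related to `v`, so it is equivalent to some `u` with the same outermost
form as `v`; `Term.exchange` replaces `v'` by `u` by turning the redex into a frame. The two
resulting configurations are again Howe-related, and the induction hypothesis applies.

Three closure properties of the Howe relation make this work: substitutivity (`Howe.subst`) for
the transitions that substitute, world weakening (`Howe.mono`) when a fresh atom extends the
state, and equivariance (`Howe.renameAtom`) for `unbind`, where renaming `a` to a fresh atom acts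
as a transposition. Equivariance of the Howe relation rests on that of termination, which is where
`ObsEquivariant` enters.

Branches of a `case` on constructors of a data type other than that of the scrutinee are neither
typed nor related. They may contain variables outside the context and, on the left of the Howe
relation, atoms outside the world. Hence contextual equivalence is not reflexive on all well-typed
terms; it is used only as a partial equivalence relation, and reflexivity is extracted from the
derivation at hand (`Howe.right`).
-/

set_option autoImplicit true

/-! ## Atoms and variables -/

abbrev Atom : Type := ℕ

/-! ## Types over a set of data type symbols -/

inductive Ty (D : Type) : Type where
  | unit : Ty D
  | prod : Ty D → Ty D → Ty D
  | arrow : Ty D → Ty D → Ty D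
  | data : D → Ty D
  | atm : Ty D
  | bnd : Ty D → Ty D

/-! ## Signatures: data types, constructors and observations -/

structure Sig : Type 1 where
  D : Type
  C : Type
  O : Type
  [finD : Fintype D]
  [finC : Fintype C]
  [finO : Fintype O]
  natD : D
  argTy : C → Ty D
  resTy : C → D
  zeroC : C
  succC : C
  zeroArg : argTy zeroC = Ty.unit
  zeroRes : resTy zeroC = natD
  succArg : argTy succC = Ty.data natD
  succRes : resTy succC = natD
  arity : O → ℕ
  obsVal : O → List Atom → List Atom → ℕ
  eqO : O
  eqArity : arity eqO = 2
  eqSem : ∀ (s : List Atom) (a b : Atom),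
    obsVal eqO s [a, b] = if a = b then 0 else 1

attribute [instance] Sig.finD Sig.finC Sig.finO

/-! ## Terms (de Bruijn representation; values are a sub-grammar cut out by `IsVal`) -/

inductive Tm (σ : Sig) : Type where
  | var : ℕ → Tm σ
  | unit : Tm σ
  | pair : Tm σ → Tm σ → Tm σ
  | fn : Tm σ → Tm σ          -- fun(f x = e); de Bruijn: var 0 = x, var 1 = f
  | con : σ.C → Tm σ → Tm σ
  | atom : Atom → Tm σ
  | bindv : Tm σ → Tm σ → Tm σ -- atom binding ⟨⟨v₁⟩⟩v₂
  | lett : Tm σ → Tm σ → Tm σ  -- let x = e₁ in e₂; binds var 0 in e₂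
  | fst : Tm σ → Tm σ
  | snd : Tm σ → Tm σ
  | app : Tm σ → Tm σ → Tm σ
  | case : Tm σ → (σ.C → Tm σ) → Tm σ -- match; each branch binds var 0
  | fresh : Tm σ
  | unbind : Tm σ → Tm σ
  | obs : (o : σ.O) → (Fin (σ.arity o) → Tm σ) → Tm σ

inductive IsVal {σ : Sig} : Tm σ → Prop where
  | var : IsVal (Tm.var n)
  | unit : IsVal Tm.unit
  | pair : IsVal v₁ → IsVal v₂ → IsVal (Tm.pair v₁ v₂)
  | fn : IsVal (Tm.fn e)
  | con : IsVal v → IsVal (Tm.con c v)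
  | atom : IsVal (Tm.atom a)
  | bindv : IsVal v₁ → IsVal v₂ → IsVal (Tm.bindv v₁ v₂)

/-! ## Renaming and substitution of variables -/

def upr (r : ℕ → ℕ) : ℕ → ℕ
  | 0 => 0
  | n + 1 => r n + 1

namespace Tm

variable {σ : Sig}

def renV : Tm σ → (ℕ → ℕ) → Tm σ
  | .var n, r => .var (r n)
  | .unit, _ => .unit
  | .pair t₁ t₂, r => .pair (renV t₁ r) (renV t₂ r)
  | .fn e, r => .fn (renV e (upr (upr r)))
  | .con c t, r => .con c (renV t r)
  | .atom a, _ => .atom a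
  | .bindv t₁ t₂, r => .bindv (renV t₁ r) (renV t₂ r)
  | .lett e₁ e₂, r => .lett (renV e₁ r) (renV e₂ (upr r))
  | .fst t, r => .fst (renV t r)
  | .snd t, r => .snd (renV t r)
  | .app t₁ t₂, r => .app (renV t₁ r) (renV t₂ r)
  | .case t br, r => .case (renV t r) (fun c => renV (br c) (upr r))
  | .fresh, _ => .fresh
  | .unbind t, r => .unbind (renV t r)
  | .obs o args, r => .obs o (fun i => renV (args i) r)

def ups (ρ : ℕ → Tm σ) : ℕ → Tm σ
  | 0 => .var 0
  | n + 1 => renV (ρ n) Nat.succ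

def subst : Tm σ → (ℕ → Tm σ) → Tm σ
  | .var n, ρ => ρ n
  | .unit, _ => .unit
  | .pair t₁ t₂, ρ => .pair (subst t₁ ρ) (subst t₂ ρ)
  | .fn e, ρ => .fn (subst e (ups (ups ρ)))
  | .con c t, ρ => .con c (subst t ρ)
  | .atom a, _ => .atom a
  | .bindv t₁ t₂, ρ => .bindv (subst t₁ ρ) (subst t₂ ρ)
  | .lett e₁ e₂, ρ => .lett (subst e₁ ρ) (subst e₂ (ups ρ))
  | .fst t, ρ => .fst (subst t ρ)
  | .snd t, ρ => .snd (subst t ρ)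
  | .app t₁ t₂, ρ => .app (subst t₁ ρ) (subst t₂ ρ)
  | .case t br, ρ => .case (subst t ρ) (fun c => subst (br c) (ups ρ))
  | .fresh, _ => .fresh
  | .unbind t, ρ => .unbind (subst t ρ)
  | .obs o args, ρ => .obs o (fun i => subst (args i) ρ)

/-- The substitution [v/x₀]. -/
def cons1 (v : Tm σ) : ℕ → Tm σ
  | 0 => v
  | n + 1 => .var n

/-- The substitution [v/x₀, f/x₁]. -/
def cons2 (v f : Tm σ) : ℕ → Tm σ
  | 0 => v
  | 1 => f
  | n + 2 => .var n

/-- e[v/x] (single capture-avoiding substitution for the last-bound variable). -/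
def subst1 (e v : Tm σ) : Tm σ := subst e (cons1 v)

/-- e[v/x, f/f'] (used for function application). -/
def subst2 (e v f : Tm σ) : Tm σ := subst e (cons2 v f)

/-! ## Atoms of a term, renaming/permuting atoms, observation symbols -/

def atoms : Tm σ → Finset Atom
  | .var _ => ∅
  | .unit => ∅
  | .pair t₁ t₂ => atoms t₁ ∪ atoms t₂
  | .fn e => atoms e
  | .con _ t => atoms t
  | .atom a => {a}
  | .bindv t₁ t₂ => atoms t₁ ∪ atoms t₂
  | .lett e₁ e₂ => atoms e₁ ∪ atoms e₂
  | .fst t => atoms t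
  | .snd t => atoms t
  | .app t₁ t₂ => atoms t₁ ∪ atoms t₂
  | .case t br => atoms t ∪ Finset.univ.biUnion (fun c => atoms (br c))
  | .fresh => ∅
  | .unbind t => atoms t
  | .obs _ args => Finset.univ.biUnion (fun i => atoms (args i))

def mapAtoms : Tm σ → (Atom → Atom) → Tm σ
  | .var n, _ => .var n
  | .unit, _ => .unit
  | .pair t₁ t₂, f => .pair (mapAtoms t₁ f) (mapAtoms t₂ f)
  | .fn e, f => .fn (mapAtoms e f)
  | .con c t, f => .con c (mapAtoms t f)
  | .atom a, f => .atom (f a)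
  | .bindv t₁ t₂, f => .bindv (mapAtoms t₁ f) (mapAtoms t₂ f)
  | .lett e₁ e₂, f => .lett (mapAtoms e₁ f) (mapAtoms e₂ f)
  | .fst t, f => .fst (mapAtoms t f)
  | .snd t, f => .snd (mapAtoms t f)
  | .app t₁ t₂, f => .app (mapAtoms t₁ f) (mapAtoms t₂ f)
  | .case t br, f => .case (mapAtoms t f) (fun c => mapAtoms (br c) f)
  | .fresh, _ => .fresh
  | .unbind t, f => .unbind (mapAtoms t f)
  | .obs o args, f => .obs o (fun i => mapAtoms (args i) f)

/-- v[a := a'] : rename all occurrences of atom a to a'. -/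
def renameAtom (t : Tm σ) (a a' : Atom) : Tm σ :=
  t.mapAtoms (fun b => if b = a then a' else b)

def obsSyms : Tm σ → Set σ.O
  | .var _ => ∅
  | .unit => ∅
  | .pair t₁ t₂ => obsSyms t₁ ∪ obsSyms t₂
  | .fn e => obsSyms e
  | .con _ t => obsSyms t
  | .atom _ => ∅
  | .bindv t₁ t₂ => obsSyms t₁ ∪ obsSyms t₂
  | .lett e₁ e₂ => obsSyms e₁ ∪ obsSyms e₂
  | .fst t => obsSyms t
  | .snd t => obsSyms t
  | .app t₁ t₂ => obsSyms t₁ ∪ obsSyms t₂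
  | .case t br => obsSyms t ∪ ⋃ c, obsSyms (br c)
  | .fresh => ∅
  | .unbind t => obsSyms t
  | .obs o args => insert o (⋃ i, obsSyms (args i))

end Tm

/-! ## Frame stacks -/

inductive Stk (σ : Sig) : Type where
  | id : Stk σ
  | cons : Stk σ → Tm σ → Stk σ  -- S∘(x.e); e binds var 0

namespace Stk

variable {σ : Sig}

def atoms : Stk σ → Finset Atom
  | .id => ∅
  | .cons S e => atoms S ∪ e.atoms

def obsSyms : Stk σ → Set σ.O
  | .id => ∅
  | .cons S e => obsSyms S ∪ e.obsSyms

def mapAtoms : Stk σ → (Atom → Atom) → Stk σ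
  | .id, _ => .id
  | .cons S e, f => .cons (mapAtoms S f) (e.mapAtoms f)

/-- S[e]: Id[e] = e, (S∘(x.e'))[e] = S[let x = e in e']. -/
def fill : Stk σ → Tm σ → Tm σ
  | .id, e => e
  | .cons S e', e => fill S (Tm.lett e e')

end Stk

/-! ## Numerals -/

def numeral (σ : Sig) : ℕ → Tm σ
  | 0 => Tm.con σ.zeroC Tm.unit
  | n + 1 => Tm.con σ.succC (numeral σ n)

/-! ## Configurations -/

structure Config (σ : Sig) : Type where
  st : List Atom
  stk : Stk σ
  tm : Tm σ

/-! ## Typing -/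

inductive HasTy (σ : Sig) : List (Ty σ.D) → Tm σ → Ty σ.D → Prop where
  | var (Γ : List (Ty σ.D)) (n : ℕ) (τ : Ty σ.D) :
      Γ[n]? = some τ → HasTy σ Γ (Tm.var n) τ
  | unit : HasTy σ Γ Tm.unit Ty.unit
  | pair : IsVal v₁ → IsVal v₂ → HasTy σ Γ v₁ τ₁ → HasTy σ Γ v₂ τ₂ →
      HasTy σ Γ (Tm.pair v₁ v₂) (Ty.prod τ₁ τ₂)
  | fn : HasTy σ (τ :: Ty.arrow τ τ' :: Γ) e τ' →
      HasTy σ Γ (Tm.fn e) (Ty.arrow τ τ')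
  | con : IsVal v → HasTy σ Γ v (σ.argTy c) →
      HasTy σ Γ (Tm.con c v) (Ty.data (σ.resTy c))
  | atom : HasTy σ Γ (Tm.atom a) Ty.atm
  | bindv : IsVal v₁ → IsVal v₂ → HasTy σ Γ v₁ Ty.atm → HasTy σ Γ v₂ τ →
      HasTy σ Γ (Tm.bindv v₁ v₂) (Ty.bnd τ)
  | lett : HasTy σ Γ e₁ τ → HasTy σ (τ :: Γ) e₂ τ' →
      HasTy σ Γ (Tm.lett e₁ e₂) τ'
  | fst : IsVal v → HasTy σ Γ v (Ty.prod τ₁ τ₂) → HasTy σ Γ (Tm.fst v) τ₁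
  | snd : IsVal v → HasTy σ Γ v (Ty.prod τ₁ τ₂) → HasTy σ Γ (Tm.snd v) τ₂
  | app : IsVal v₁ → IsVal v₂ → HasTy σ Γ v₁ (Ty.arrow τ τ') → HasTy σ Γ v₂ τ →
      HasTy σ Γ (Tm.app v₁ v₂) τ'
  | case (br : σ.C → Tm σ) : IsVal v → HasTy σ Γ v (Ty.data δ) →
      (∀ c, σ.resTy c = δ → HasTy σ (σ.argTy c :: Γ) (br c) τ) →
      HasTy σ Γ (Tm.case v br) τ
  | fresh : HasTy σ Γ Tm.fresh Ty.atm
  | unbind : IsVal v → HasTy σ Γ v (Ty.bnd τ) →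
      HasTy σ Γ (Tm.unbind v) (Ty.prod Ty.atm τ)
  | obs (o : σ.O) (args : Fin (σ.arity o) → Tm σ) :
      (∀ i, IsVal (args i)) → (∀ i, HasTy σ Γ (args i) Ty.atm) →
      HasTy σ Γ (Tm.obs o args) (Ty.data σ.natD)

inductive HasTyStk (σ : Sig) : List (Ty σ.D) → Stk σ → Ty σ.D → Ty σ.D → Prop where
  | id : HasTyStk σ Γ Stk.id τ τ
  | cons : HasTy σ (τ :: Γ) e τ' → HasTyStk σ Γ S τ' τ'' →
      HasTyStk σ Γ (Stk.cons S e) τ τ''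

/-! ## The transition relation -/

inductive Step (σ : Sig) : Config σ → Config σ → Prop where
  | pop : IsVal v →
      Step σ ⟨s, Stk.cons S e, v⟩ ⟨s, S, e.subst1 v⟩
  | lett :
      Step σ ⟨s, S, Tm.lett e₁ e₂⟩ ⟨s, Stk.cons S e₂, e₁⟩
  | case (br : σ.C → Tm σ) : IsVal v →
      Step σ ⟨s, S, Tm.case (Tm.con c v) br⟩ ⟨s, S, (br c).subst1 v⟩
  | fst : IsVal v₁ → IsVal v₂ →
      Step σ ⟨s, S, Tm.fst (Tm.pair v₁ v₂)⟩ ⟨s, S, v₁⟩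
  | snd : IsVal v₁ → IsVal v₂ →
      Step σ ⟨s, S, Tm.snd (Tm.pair v₁ v₂)⟩ ⟨s, S, v₂⟩
  | app : IsVal v →
      Step σ ⟨s, S, Tm.app (Tm.fn e) v⟩ ⟨s, S, e.subst2 v (Tm.fn e)⟩
  | fresh : a' ∉ s →
      Step σ ⟨s, S, Tm.fresh⟩ ⟨s ++ [a'], S, Tm.atom a'⟩
  | unbind : a' ∉ s → IsVal v →
      Step σ ⟨s, S, Tm.unbind (Tm.bindv (Tm.atom a) v)⟩
             ⟨s ++ [a'], S, Tm.pair (Tm.atom a') (v.renameAtom a a')⟩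
  | obs (o : σ.O) (as : Fin (σ.arity o) → Atom) :
      (∀ i, as i ∈ s) →
      Step σ ⟨s, S, Tm.obs o (fun i => Tm.atom (as i))⟩
             ⟨s, S, numeral σ (σ.obsVal o s (List.ofFn as))⟩

/-! ## Termination -/

inductive TermN (σ : Sig) : Config σ → ℕ → Prop where
  | val : IsVal v → TermN σ ⟨s, Stk.id, v⟩ 0
  | step : Step σ c c' → TermN σ c' n → TermN σ c (n + 1)

def Term (σ : Sig) (c : Config σ) : Prop := ∃ n, TermN σ c n

/-! ## Equivariance and affineness of observations -/

def ObsEquivariant (σ : Sig) : Prop :=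
  ∀ (π : Equiv.Perm Atom), {a : Atom | π a ≠ a}.Finite →
    ∀ (o : σ.O) (s as : List Atom),
      s.Nodup → as.length = σ.arity o → (∀ a ∈ as, a ∈ s) →
      σ.obsVal o s as = σ.obsVal o (s.map ⇑π) (as.map ⇑π)

def AffineObs (σ : Sig) (o : σ.O) : Prop :=
  ∀ (s : List Atom) (a' : Atom) (as : List Atom),
    s.Nodup → a' ∉ s → as.length = σ.arity o → (∀ a ∈ as, a ∈ s) →
    σ.obsVal o (a' :: s) as = σ.obsVal o s as

/-! ## Operational equivalence of closed expressions, and contextual equivalence -/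

def OpEq (σ : Sig) (w : Finset Atom) (e e' : Tm σ) (τ : Ty σ.D) : Prop :=
  e.atoms ∪ e'.atoms ⊆ w ∧ HasTy σ [] e τ ∧ HasTy σ [] e' τ ∧
  ∀ (s : List Atom) (S : Stk σ) (τ' : Ty σ.D),
    s.Nodup → w ∪ S.atoms ⊆ s.toFinset → HasTyStk σ [] S τ τ' →
    (Term σ ⟨s, S, e⟩ ↔ Term σ ⟨s, S, e'⟩)

/-- A closing substitution for context Γ with atoms in w. -/
def ClosingSubst (σ : Sig) (Γ : List (Ty σ.D)) (w : Finset Atom) (vs : ℕ → Tm σ) : Prop :=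
  ∀ i τ, Γ[i]? = some τ → IsVal (vs i) ∧ HasTy σ [] (vs i) τ ∧ (vs i).atoms ⊆ w

def CtxEq (σ : Sig) (Γ : List (Ty σ.D)) (w : Finset Atom) (e e' : Tm σ) (τ : Ty σ.D) : Prop :=
  e.atoms ∪ e'.atoms ⊆ w ∧ HasTy σ Γ e τ ∧ HasTy σ Γ e' τ ∧
  ∀ (w' : Finset Atom) (vs : ℕ → Tm σ), w ⊆ w' → ClosingSubst σ Γ w' vs →
    OpEq σ w' (e.subst vs) (e'.subst vs) τ

/-! ## Expression relations -/

def ExprRel (σ : Sig) : Type :=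
  List (Ty σ.D) → Finset Atom → Tm σ → Tm σ → Ty σ.D → Prop

def IsExprRel (σ : Sig) (R : ExprRel σ) : Prop :=
  ∀ Γ w e e' τ, R Γ w e e' τ →
    e.atoms ∪ e'.atoms ⊆ w ∧ HasTy σ Γ e τ ∧ HasTy σ Γ e' τ

/-- Compatible refinement ℰ̂ of an expression relation ℰ. -/
inductive CompRef (σ : Sig) (R : ExprRel σ) :
    List (Ty σ.D) → Finset Atom → Tm σ → Tm σ → Ty σ.D → Prop where
  | var (Γ : List (Ty σ.D)) (n : ℕ) (τ : Ty σ.D) :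
      Γ[n]? = some τ → CompRef σ R Γ w (Tm.var n) (Tm.var n) τ
  | unit : CompRef σ R Γ w Tm.unit Tm.unit Ty.unit
  | pair : IsVal v₁ → IsVal v₂ → IsVal v₁' → IsVal v₂' →
      R Γ w v₁ v₁' τ₁ → R Γ w v₂ v₂' τ₂ →
      CompRef σ R Γ w (Tm.pair v₁ v₂) (Tm.pair v₁' v₂') (Ty.prod τ₁ τ₂)
  | fn : R (τ :: Ty.arrow τ τ' :: Γ) w e e' τ' →
      CompRef σ R Γ w (Tm.fn e) (Tm.fn e') (Ty.arrow τ τ')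
  | con : IsVal v → IsVal v' → R Γ w v v' (σ.argTy c) →
      CompRef σ R Γ w (Tm.con c v) (Tm.con c v') (Ty.data (σ.resTy c))
  | atom : a ∈ w → CompRef σ R Γ w (Tm.atom a) (Tm.atom a) Ty.atm
  | bindv : IsVal v₁ → IsVal v₂ → IsVal v₁' → IsVal v₂' →
      R Γ w v₁ v₁' Ty.atm → R Γ w v₂ v₂' τ →
      CompRef σ R Γ w (Tm.bindv v₁ v₂) (Tm.bindv v₁' v₂') (Ty.bnd τ)
  | lett : R Γ w e₁ e₁' τ → R (τ :: Γ) w e₂ e₂' τ' →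
      CompRef σ R Γ w (Tm.lett e₁ e₂) (Tm.lett e₁' e₂') τ'
  | fst : IsVal v → IsVal v' → R Γ w v v' (Ty.prod τ₁ τ₂) →
      CompRef σ R Γ w (Tm.fst v) (Tm.fst v') τ₁
  | snd : IsVal v → IsVal v' → R Γ w v v' (Ty.prod τ₁ τ₂) →
      CompRef σ R Γ w (Tm.snd v) (Tm.snd v') τ₂
  | app : IsVal v₁ → IsVal v₂ → IsVal v₁' → IsVal v₂' →
      R Γ w v₁ v₁' (Ty.arrow τ τ') → R Γ w v₂ v₂' τ →
      CompRef σ R Γ w (Tm.app v₁ v₂) (Tm.app v₁' v₂') τ'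
  | case (br br' : σ.C → Tm σ) : IsVal v → IsVal v' → R Γ w v v' (Ty.data δ) →
      (∀ c, σ.resTy c = δ → R (σ.argTy c :: Γ) w (br c) (br' c) τ) →
      CompRef σ R Γ w (Tm.case v br) (Tm.case v' br') τ
  | fresh : CompRef σ R Γ w Tm.fresh Tm.fresh Ty.atm
  | unbind : IsVal v → IsVal v' → R Γ w v v' (Ty.bnd τ) →
      CompRef σ R Γ w (Tm.unbind v) (Tm.unbind v') (Ty.prod Ty.atm τ)
  | obs (o : σ.O) (args args' : Fin (σ.arity o) → Tm σ) :
      (∀ i, IsVal (args i)) → (∀ i, IsVal (args' i)) →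
      (∀ i, R Γ w (args i) (args' i) Ty.atm) →
      CompRef σ R Γ w (Tm.obs o args) (Tm.obs o args') (Ty.data σ.natD)

/-- Compatible refinement extended to frame stacks. -/
inductive StkRef (σ : Sig) (R : ExprRel σ) :
    List (Ty σ.D) → Finset Atom → Stk σ → Stk σ → Ty σ.D → Ty σ.D → Prop where
  | id : StkRef σ R Γ w Stk.id Stk.id τ τ
  | cons : R (τ :: Γ) w e e' τ' → StkRef σ R Γ w S S' τ' τ'' →
      StkRef σ R Γ w (Stk.cons S e) (Stk.cons S' e') τ τ''

/-! ## Properties of expression relations -/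

def RelRefl (σ : Sig) (R : ExprRel σ) : Prop :=
  ∀ Γ w (e : Tm σ) τ, e.atoms ⊆ w → HasTy σ Γ e τ → R Γ w e e τ

def RelSymm (σ : Sig) (R : ExprRel σ) : Prop :=
  ∀ Γ w e e' τ, R Γ w e e' τ → R Γ w e' e τ

def RelTrans (σ : Sig) (R : ExprRel σ) : Prop :=
  ∀ Γ w e e' e'' τ, R Γ w e e' τ → R Γ w e' e'' τ → R Γ w e e'' τ

def RelCompat (σ : Sig) (R : ExprRel σ) : Prop :=
  ∀ Γ w e e' τ, CompRef σ R Γ w e e' τ → R Γ w e e' τ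

def RelSubst (σ : Sig) (R : ExprRel σ) : Prop :=
  ∀ Γ w (v v' : Tm σ) τ e e' τ', IsVal v → IsVal v' →
    R Γ w v v' τ → R (τ :: Γ) w e e' τ' →
    R Γ w (e.subst1 v) (e'.subst1 v') τ'

def RelEquivariant (σ : Sig) (R : ExprRel σ) : Prop :=
  ∀ (π : Equiv.Perm Atom), {a : Atom | π a ≠ a}.Finite →
    ∀ Γ w (e e' : Tm σ) τ, R Γ w e e' τ →
      R Γ (w.image ⇑π) (e.mapAtoms ⇑π) (e'.mapAtoms ⇑π) τ

def RelAdequate (σ : Sig) (R : ExprRel σ) : Prop :=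
  ∀ w e e' τ, R [] w e e' τ → OpEq σ w e e' τ

/-! ## The Howe relation (least relation closed under the Howe rule) -/

def Howe (σ : Sig) : ExprRel σ := fun Γ w e e'' τ =>
  ∀ R : ExprRel σ,
    (∀ Γ' w' a c τ',
      (∃ b, CompRef σ R Γ' w' a b τ' ∧ CtxEq σ Γ' w' b c τ') → R Γ' w' a c τ') →
    R Γ w e e'' τ

/-! ## Nominal arities and α-equivalence -/

inductive NominalArity (σ : Sig) : Ty σ.D → Prop where
  | unit : NominalArity σ Ty.unit
  | prod : NominalArity σ t₁ → NominalArity σ t₂ → NominalArity σ (Ty.prod t₁ t₂)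
  | data (d : σ.D) : NominalArity σ (Ty.data d)
  | atm : NominalArity σ Ty.atm
  | bnd : NominalArity σ t → NominalArity σ (Ty.bnd t)

inductive AlphaEq (σ : Sig) : Finset Atom → Tm σ → Tm σ → Ty σ.D → Prop where
  | unit : AlphaEq σ w Tm.unit Tm.unit Ty.unit
  | pair : AlphaEq σ w v₁ v₁' a₁ → AlphaEq σ w v₂ v₂' a₂ →
      AlphaEq σ w (Tm.pair v₁ v₂) (Tm.pair v₁' v₂') (Ty.prod a₁ a₂)
  | con : AlphaEq σ w v v' (σ.argTy c) →
      AlphaEq σ w (Tm.con c v) (Tm.con c v') (Ty.data (σ.resTy c))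
  | atom : a ∈ w → AlphaEq σ w (Tm.atom a) (Tm.atom a) Ty.atm
  | bindv (a a' a'' : Atom) (v v' : Tm σ) : a'' ∉ w →
      insert a (insert a' (v.atoms ∪ v'.atoms)) ⊆ w →
      AlphaEq σ (insert a'' w) (v.renameAtom a a'') (v'.renameAtom a' a'') ar →
      AlphaEq σ w (Tm.bindv (Tm.atom a) v) (Tm.bindv (Tm.atom a') v') (Ty.bnd ar)

/-! ## Well-typed configurations -/

def ConfigTy (σ : Sig) (w : Finset Atom) (c : Config σ) (τ : Ty σ.D) : Prop :=
  c.st.Nodup ∧ c.stk.atoms ∪ c.tm.atoms ⊆ c.st.toFinset ∧ c.st.toFinset = w ∧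
  ∃ τ', HasTyStk σ [] c.stk τ' τ ∧ HasTy σ [] c.tm τ'

namespace Tm

/-! ### Renaming, substitution and atoms -/

variable {σ : Sig}

theorem upr_comp (r r' : ℕ → ℕ) : (fun i => upr r' (upr r i)) = upr (fun i => r' (r i)) := by
  funext i; cases i <;> rfl

theorem renV_renV (e : Tm σ) (r r' : ℕ → ℕ) :
    (e.renV r).renV r' = e.renV (fun i => r' (r i)) := by
  induction e generalizing r r' <;> simp_all [renV, upr_comp]

theorem ups_upr (r : ℕ → ℕ) (ρ : ℕ → Tm σ) :
    (fun i => ups ρ (upr r i)) = ups (fun i => ρ (r i)) := by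
  funext i; cases i <;> rfl

theorem subst_renV (e : Tm σ) (r : ℕ → ℕ) (ρ : ℕ → Tm σ) :
    (e.renV r).subst ρ = e.subst (fun i => ρ (r i)) := by
  induction e generalizing r ρ <;> simp_all [renV, subst, ups_upr]

theorem renV_ups (r : ℕ → ℕ) (ρ : ℕ → Tm σ) :
    (fun i => (ups ρ i).renV (upr r)) = ups (fun i => (ρ i).renV r) := by
  funext i; cases i <;> simp [ups, renV, renV_renV, upr]

theorem renV_subst (e : Tm σ) (ρ : ℕ → Tm σ) (r : ℕ → ℕ) :
    (e.subst ρ).renV r = e.subst (fun i => (ρ i).renV r) := by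
  induction e generalizing r ρ <;> simp_all [renV, subst, renV_ups]

theorem subst_ups (ρ ρ' : ℕ → Tm σ) :
    (fun i => (ups ρ i).subst (ups ρ')) = ups (fun i => (ρ i).subst ρ') := by
  funext i; cases i <;> simp [ups, subst, subst_renV, renV_subst]

theorem subst_subst (e : Tm σ) (ρ ρ' : ℕ → Tm σ) :
    (e.subst ρ).subst ρ' = e.subst (fun i => (ρ i).subst ρ') := by
  induction e generalizing ρ ρ' <;> simp_all [subst, subst_ups]

theorem ups_var : ups (Tm.var : ℕ → Tm σ) = Tm.var := by
  funext i; cases i <;> rfl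

theorem subst_var (e : Tm σ) : e.subst Tm.var = e := by
  induction e <;> simp_all [subst, ups_var]

/-- Plugging a value into a weakened term does nothing. -/
theorem subst1_renV_succ (e v : Tm σ) : (e.renV Nat.succ).subst (cons1 v) = e := by
  rw [subst_renV]; exact subst_var e

theorem subst1_renV_upr_succ (e v : Tm σ) :
    (e.renV (upr Nat.succ)).subst (ups (cons1 v)) = e := by
  rw [subst_renV, ups_upr]
  exact (congrArg e.subst ups_var).trans (subst_var e)

theorem atoms_renV (e : Tm σ) (r : ℕ → ℕ) : (e.renV r).atoms = e.atoms := by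
  induction e generalizing r <;> simp_all [renV, atoms]

theorem atoms_ups {w : Finset Atom} {ρ : ℕ → Tm σ} (h : ∀ i, (ρ i).atoms ⊆ w) (i : ℕ) :
    (ups ρ i).atoms ⊆ w := by
  cases i with
  | zero => simp [ups, atoms]
  | succ n => simpa [ups, atoms_renV] using h n

theorem atoms_subst {w : Finset Atom} (e : Tm σ) {ρ : ℕ → Tm σ} (he : e.atoms ⊆ w)
    (h : ∀ i, (ρ i).atoms ⊆ w) : (e.subst ρ).atoms ⊆ w := by
  induction e generalizing ρ with
  | fn e ih => exact ih he (atoms_ups (atoms_ups h))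
  | _ =>
    simp_all [subst, atoms, Finset.union_subset_iff, Finset.biUnion_subset_iff_forall_subset,
      atoms_ups]

theorem atoms_mapAtoms (e : Tm σ) (f : Atom → Atom) :
    (e.mapAtoms f).atoms = e.atoms.image f := by
  induction e <;>
    simp_all [mapAtoms, atoms, Finset.image_union, Finset.biUnion_image]

theorem mapAtoms_mapAtoms (e : Tm σ) (f g : Atom → Atom) :
    (e.mapAtoms f).mapAtoms g = e.mapAtoms (fun a => g (f a)) := by
  induction e <;> simp_all [mapAtoms]

theorem mapAtoms_congr (e : Tm σ) {f g : Atom → Atom} (h : ∀ a ∈ e.atoms, f a = g a) :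
    e.mapAtoms f = e.mapAtoms g := by
  induction e <;> simp_all [mapAtoms, atoms]
  all_goals grind

theorem mapAtoms_id (e : Tm σ) : e.mapAtoms (fun a => a) = e := by
  induction e <;> simp_all [mapAtoms]

theorem mapAtoms_renV (e : Tm σ) (f : Atom → Atom) (r : ℕ → ℕ) :
    (e.renV r).mapAtoms f = (e.mapAtoms f).renV r := by
  induction e generalizing r <;> simp_all [renV, mapAtoms]

theorem mapAtoms_ups (f : Atom → Atom) (ρ : ℕ → Tm σ) :
    (fun i => (ups ρ i).mapAtoms f) = ups (fun i => (ρ i).mapAtoms f) := by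
  funext i; cases i <;> simp [ups, mapAtoms, mapAtoms_renV]

theorem mapAtoms_subst (e : Tm σ) (f : Atom → Atom) (ρ : ℕ → Tm σ) :
    (e.subst ρ).mapAtoms f = (e.mapAtoms f).subst (fun i => (ρ i).mapAtoms f) := by
  induction e generalizing ρ <;> simp_all [subst, mapAtoms]
  all_goals simp only [← mapAtoms_ups]

theorem mapAtoms_subst1 (e v : Tm σ) (f : Atom → Atom) :
    (e.subst1 v).mapAtoms f = (e.mapAtoms f).subst1 (v.mapAtoms f) := by
  rw [subst1, mapAtoms_subst, subst1]
  congr 1; funext i; cases i <;> rfl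

theorem mapAtoms_subst2 (e v u : Tm σ) (f : Atom → Atom) :
    (e.subst2 v u).mapAtoms f = (e.mapAtoms f).subst2 (v.mapAtoms f) (u.mapAtoms f) := by
  rw [subst2, mapAtoms_subst, subst2]
  congr 1; funext i; rcases i with _ | _ | i <;> rfl

theorem mapAtoms_numeral (f : Atom → Atom) (n : ℕ) :
    (numeral σ n).mapAtoms f = numeral σ n := by
  induction n <;> simp_all [numeral, mapAtoms]

theorem mapAtoms_renameAtom (v : Tm σ) (π : Equiv.Perm Atom) (a a' : Atom) :
    (v.renameAtom a a').mapAtoms π = (v.mapAtoms π).renameAtom (π a) (π a') := by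
  simp only [renameAtom, mapAtoms_mapAtoms]
  congr 1; funext b
  by_cases h : b = a <;> simp [h]

end Tm

namespace Stk

variable {σ : Sig}

theorem atoms_mapAtoms (S : Stk σ) (f : Atom → Atom) :
    (S.mapAtoms f).atoms = S.atoms.image f := by
  induction S <;> simp_all [mapAtoms, atoms, Finset.image_union, Tm.atoms_mapAtoms]

theorem mapAtoms_mapAtoms (S : Stk σ) (f g : Atom → Atom) :
    (S.mapAtoms f).mapAtoms g = S.mapAtoms (fun a => g (f a)) := by
  induction S <;> simp_all [mapAtoms, Tm.mapAtoms_mapAtoms]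

theorem mapAtoms_id (S : Stk σ) : S.mapAtoms (fun a => a) = S := by
  induction S <;> simp_all [mapAtoms, Tm.mapAtoms_id]

end Stk

/-! ### Values and typing -/

section Typing

variable {σ : Sig} {Γ Δ : List (Ty σ.D)} {e v : Tm σ} {τ τ' : Ty σ.D}

theorem IsVal.renV (h : IsVal v) (r : ℕ → ℕ) : IsVal (v.renV r) := by
  induction h <;> constructor <;> assumption

theorem IsVal.mapAtoms (h : IsVal v) (f : Atom → Atom) : IsVal (v.mapAtoms f) := by
  induction h <;> constructor <;> assumption

theorem IsVal.subst (h : IsVal v) {ρ : ℕ → Tm σ} (hρ : ∀ i, IsVal (ρ i)) :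
    IsVal (v.subst ρ) := by
  induction h with
  | var => exact hρ _
  | _ => constructor <;> assumption

theorem IsVal.ups {ρ : ℕ → Tm σ} (h : ∀ i, IsVal (ρ i)) (i : ℕ) : IsVal (Tm.ups ρ i) := by
  cases i with
  | zero => exact .var
  | succ n => exact (h n).renV _

/-- For a typed value only the variables of the context matter. -/
theorem IsVal.subst_of_hasTy (h : IsVal v) (ht : HasTy σ Γ v τ) {ρ : ℕ → Tm σ}
    (hρ : ∀ i τ, Γ[i]? = some τ → IsVal (ρ i)) : IsVal (v.subst ρ) := by
  induction h generalizing τ with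
  | var => cases ht with | var _ _ _ hn => exact hρ _ _ hn
  | unit => exact .unit
  | fn => exact .fn
  | atom => exact .atom
  | pair _ _ ih₁ ih₂ => cases ht with | pair _ _ h₁ h₂ => exact .pair (ih₁ h₁) (ih₂ h₂)
  | con _ ih => cases ht with | con _ h => exact .con (ih h)
  | bindv _ _ ih₁ ih₂ => cases ht with | bindv _ _ h₁ h₂ => exact .bindv (ih₁ h₁) (ih₂ h₂)

theorem upr_lookup {r : ℕ → ℕ} (hr : ∀ i τ, Γ[i]? = some τ → Δ[r i]? = some τ) (τ₀ : Ty σ.D)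
    (i : ℕ) (τ : Ty σ.D) (h : (τ₀ :: Γ)[i]? = some τ) : (τ₀ :: Δ)[upr r i]? = some τ := by
  cases i with
  | zero => simpa [upr] using h
  | succ n => simpa [upr] using hr n τ (by simpa using h)

theorem HasTy.renV (h : HasTy σ Γ e τ) {r : ℕ → ℕ}
    (hr : ∀ i τ, Γ[i]? = some τ → Δ[r i]? = some τ) : HasTy σ Δ (e.renV r) τ := by
  induction h generalizing Δ r with
  | var _ _ _ h => exact .var _ _ _ (hr _ _ h)
  | unit => exact .unit
  | pair h₁ h₂ _ _ ih₁ ih₂ => exact .pair (h₁.renV r) (h₂.renV r) (ih₁ hr) (ih₂ hr)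
  | fn _ ih => exact .fn (ih (upr_lookup (upr_lookup hr _) _))
  | con h _ ih => exact .con (h.renV r) (ih hr)
  | atom => exact .atom
  | bindv h₁ h₂ _ _ ih₁ ih₂ => exact .bindv (h₁.renV r) (h₂.renV r) (ih₁ hr) (ih₂ hr)
  | lett _ _ ih₁ ih₂ => exact .lett (ih₁ hr) (ih₂ (upr_lookup hr _))
  | fst h _ ih => exact .fst (h.renV r) (ih hr)
  | snd h _ ih => exact .snd (h.renV r) (ih hr)
  | app h₁ h₂ _ _ ih₁ ih₂ => exact .app (h₁.renV r) (h₂.renV r) (ih₁ hr) (ih₂ hr)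
  | case br h _ _ ih₁ ih₂ =>
    exact .case _ (h.renV r) (ih₁ hr) fun c hc => ih₂ c hc (upr_lookup hr _)
  | fresh => exact .fresh
  | unbind h _ ih => exact .unbind (h.renV r) (ih hr)
  | obs o args h _ ih => exact .obs o _ (fun i => (h i).renV r) fun i => ih i hr

/-- Weakening by one variable, in the form used to build evaluation frames. -/
theorem HasTy.weaken (h : HasTy σ Γ e τ) : HasTy σ (τ' :: Γ) (e.renV Nat.succ) τ :=
  h.renV fun i τ hi => by simpa using hi

theorem ups_lookup {ρ : ℕ → Tm σ}
    (hρ : ∀ i τ, Γ[i]? = some τ → IsVal (ρ i) ∧ HasTy σ Δ (ρ i) τ) (τ₀ : Ty σ.D)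
    (i : ℕ) (τ : Ty σ.D) (h : (τ₀ :: Γ)[i]? = some τ) :
    IsVal (Tm.ups ρ i) ∧ HasTy σ (τ₀ :: Δ) (Tm.ups ρ i) τ := by
  cases i with
  | zero => exact ⟨.var, .var _ _ _ (by simpa using h)⟩
  | succ n =>
    obtain ⟨h₁, h₂⟩ := hρ n τ (by simpa using h)
    exact ⟨h₁.renV _, h₂.weaken⟩

theorem HasTy.subst (h : HasTy σ Γ e τ) {ρ : ℕ → Tm σ}
    (hρ : ∀ i τ, Γ[i]? = some τ → IsVal (ρ i) ∧ HasTy σ Δ (ρ i) τ) :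
    HasTy σ Δ (e.subst ρ) τ := by
  induction h generalizing Δ ρ with
  | var _ _ _ h => exact (hρ _ _ h).2
  | unit => exact .unit
  | pair h₁ h₂ t₁ t₂ ih₁ ih₂ =>
    have hv := fun i τ hi => (hρ i τ hi).1
    exact .pair (h₁.subst_of_hasTy t₁ hv) (h₂.subst_of_hasTy t₂ hv) (ih₁ hρ) (ih₂ hρ)
  | fn _ ih => exact .fn (ih (ups_lookup (ups_lookup hρ _) _))
  | con h t ih => exact .con (h.subst_of_hasTy t fun i τ hi => (hρ i τ hi).1) (ih hρ)
  | atom => exact .atom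
  | bindv h₁ h₂ t₁ t₂ ih₁ ih₂ =>
    have hv := fun i τ hi => (hρ i τ hi).1
    exact .bindv (h₁.subst_of_hasTy t₁ hv) (h₂.subst_of_hasTy t₂ hv) (ih₁ hρ) (ih₂ hρ)
  | lett _ _ ih₁ ih₂ => exact .lett (ih₁ hρ) (ih₂ (ups_lookup hρ _))
  | fst h t ih => exact .fst (h.subst_of_hasTy t fun i τ hi => (hρ i τ hi).1) (ih hρ)
  | snd h t ih => exact .snd (h.subst_of_hasTy t fun i τ hi => (hρ i τ hi).1) (ih hρ)
  | app h₁ h₂ t₁ t₂ ih₁ ih₂ =>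
    have hv := fun i τ hi => (hρ i τ hi).1
    exact .app (h₁.subst_of_hasTy t₁ hv) (h₂.subst_of_hasTy t₂ hv) (ih₁ hρ) (ih₂ hρ)
  | case br h t _ ih₁ ih₂ =>
    exact .case _ (h.subst_of_hasTy t fun i τ hi => (hρ i τ hi).1) (ih₁ hρ)
      fun c hc => ih₂ c hc (ups_lookup hρ _)
  | fresh => exact .fresh
  | unbind h t ih => exact .unbind (h.subst_of_hasTy t fun i τ hi => (hρ i τ hi).1) (ih hρ)
  | obs o args h t ih =>
    exact .obs o _ (fun i => (h i).subst_of_hasTy (t i) fun i τ hi => (hρ i τ hi).1)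
      fun i => ih i hρ

theorem HasTy.mapAtoms (h : HasTy σ Γ e τ) (f : Atom → Atom) :
    HasTy σ Γ (e.mapAtoms f) τ := by
  induction h with
  | var _ _ _ h => exact .var _ _ _ h
  | unit => exact .unit
  | pair h₁ h₂ _ _ ih₁ ih₂ => exact .pair (h₁.mapAtoms f) (h₂.mapAtoms f) ih₁ ih₂
  | fn _ ih => exact .fn ih
  | con h _ ih => exact .con (h.mapAtoms f) ih
  | atom => exact .atom
  | bindv h₁ h₂ _ _ ih₁ ih₂ => exact .bindv (h₁.mapAtoms f) (h₂.mapAtoms f) ih₁ ih₂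
  | lett _ _ ih₁ ih₂ => exact .lett ih₁ ih₂
  | fst h _ ih => exact .fst (h.mapAtoms f) ih
  | snd h _ ih => exact .snd (h.mapAtoms f) ih
  | app h₁ h₂ _ _ ih₁ ih₂ => exact .app (h₁.mapAtoms f) (h₂.mapAtoms f) ih₁ ih₂
  | case br h _ _ ih₁ ih₂ => exact .case _ (h.mapAtoms f) ih₁ ih₂
  | fresh => exact .fresh
  | unbind h _ ih => exact .unbind (h.mapAtoms f) ih
  | obs o args h _ ih => exact .obs o _ (fun i => (h i).mapAtoms f) ih

theorem HasTyStk.mapAtoms {S : Stk σ} (h : HasTyStk σ Γ S τ τ') (f : Atom → Atom) :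
    HasTyStk σ Γ (S.mapAtoms f) τ τ' := by
  induction h with
  | id => exact .id
  | cons h _ ih => exact .cons (h.mapAtoms f) ih

theorem isVal_numeral (n : ℕ) : IsVal (numeral σ n) := by
  induction n with
  | zero => exact .con .unit
  | succ n ih => exact .con ih

theorem hasTy_numeral (n : ℕ) : HasTy σ Γ (numeral σ n) (Ty.data σ.natD) := by
  induction n with
  | zero =>
    have := HasTy.con (σ := σ) (Γ := Γ) (c := σ.zeroC) IsVal.unit (σ.zeroArg ▸ HasTy.unit)
    rwa [σ.zeroRes] at this
  | succ n ih =>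
    have := HasTy.con (σ := σ) (Γ := Γ) (c := σ.succC) (isVal_numeral n) (σ.succArg ▸ ih)
    rwa [σ.succRes] at this

theorem subst_numeral (n : ℕ) (ρ : ℕ → Tm σ) : (numeral σ n).subst ρ = numeral σ n := by
  induction n <;> simp_all [numeral, Tm.subst]

theorem atoms_numeral (n : ℕ) : (numeral σ n).atoms = ∅ := by
  induction n <;> simp_all [numeral, Tm.atoms]

end Typing

/-! ### Equivariance of termination and of contextual equivalence -/

section Equivariance

variable {σ : Sig} {Γ Δ : List (Ty σ.D)} {w w' : Finset Atom} {e e' e'' : Tm σ} {τ τ' : Ty σ.D}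

theorem TermN.mapAtoms (hequiv : ObsEquivariant σ) (π : Equiv.Perm Atom)
    (hπ : {a : Atom | π a ≠ a}.Finite) {n : ℕ} {s : List Atom} {S : Stk σ} (hs : s.Nodup)
    (h : TermN σ ⟨s, S, e⟩ n) : TermN σ ⟨s.map π, S.mapAtoms π, e.mapAtoms π⟩ n := by
  induction n generalizing s S e with
  | zero => cases h with | val hv => exact .val (hv.mapAtoms π)
  | succ n ih =>
    cases h with
    | step hstep ht =>
    have fresh_map : ∀ {a'}, a' ∉ s → π a' ∉ s.map π := fun h => by simpa using h
    have fresh_nodup : ∀ {a'}, a' ∉ s → (s ++ [a']).Nodup := fun h => by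
      rw [List.nodup_append_comm]; simpa using ⟨h, hs⟩
    cases hstep with
    | pop hv =>
      refine .step (.pop (hv.mapAtoms π)) ?_
      rw [← Tm.mapAtoms_subst1]; exact ih hs ht
    | lett => exact .step .lett (ih hs ht)
    | case br hv =>
      refine .step (.case _ (hv.mapAtoms π)) ?_
      rw [← Tm.mapAtoms_subst1]; exact ih hs ht
    | fst h₁ h₂ => exact .step (.fst (h₁.mapAtoms π) (h₂.mapAtoms π)) (ih hs ht)
    | snd h₁ h₂ => exact .step (.snd (h₁.mapAtoms π) (h₂.mapAtoms π)) (ih hs ht)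
    | app hv =>
      have := ih hs ht
      rw [Tm.mapAtoms_subst2] at this
      exact .step (.app (hv.mapAtoms π)) this
    | fresh ha =>
      have := ih (fresh_nodup ha) ht
      rw [List.map_append] at this
      exact .step (.fresh (fresh_map ha)) this
    | unbind ha hv =>
      have := ih (fresh_nodup ha) ht
      rw [List.map_append, Tm.mapAtoms, Tm.mapAtoms_renameAtom] at this
      exact .step (.unbind (fresh_map ha) (hv.mapAtoms π)) this
    | obs o as has =>
      have := ih hs ht
      rw [Tm.mapAtoms_numeral, hequiv π hπ o s (List.ofFn as) hs (by simp)
        (by simpa [List.mem_ofFn] using has), List.map_ofFn] at this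
      exact .step (.obs o (fun i => π (as i)) fun i => List.mem_map_of_mem (has i)) this

theorem Term.mapAtoms (hequiv : ObsEquivariant σ) (π : Equiv.Perm Atom)
    (hπ : {a : Atom | π a ≠ a}.Finite) {s : List Atom} {S : Stk σ} (hs : s.Nodup)
    (h : Term σ ⟨s, S, e⟩) : Term σ ⟨s.map π, S.mapAtoms π, e.mapAtoms π⟩ :=
  h.imp fun _ => TermN.mapAtoms hequiv π hπ hs

theorem finite_support_symm {π : Equiv.Perm Atom} (hπ : {a : Atom | π a ≠ a}.Finite) :
    {a : Atom | π.symm a ≠ a}.Finite := by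
  refine hπ.subset fun a ha => ?_
  simp only [Set.mem_ofPred_eq, ne_eq, Equiv.symm_apply_eq] at ha ⊢
  exact fun h => ha h.symm

theorem Tm.mapAtoms_symm_mapAtoms (π : Equiv.Perm Atom) (e : Tm σ) :
    (e.mapAtoms π).mapAtoms π.symm = e := by
  simp [Tm.mapAtoms_mapAtoms, Tm.mapAtoms_id]

theorem Tm.mapAtoms_mapAtoms_symm (π : Equiv.Perm Atom) (e : Tm σ) :
    (e.mapAtoms π.symm).mapAtoms π = e := by
  simp [Tm.mapAtoms_mapAtoms, Tm.mapAtoms_id]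

theorem OpEq.mapAtoms (hequiv : ObsEquivariant σ) (π : Equiv.Perm Atom)
    (hπ : {a : Atom | π a ≠ a}.Finite) (h : OpEq σ w e e' τ) :
    OpEq σ (w.image π) (e.mapAtoms π) (e'.mapAtoms π) τ := by
  obtain ⟨ha, ht, ht', h⟩ := h
  refine ⟨?_, ht.mapAtoms _, ht'.mapAtoms _, fun s S τ₁ hs hsub hS => ?_⟩
  · rw [Tm.atoms_mapAtoms, Tm.atoms_mapAtoms, ← Finset.image_union]
    exact Finset.image_subset_image ha
  · have hs' : (s.map π.symm).Nodup := hs.map π.symm.injective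
    have key : ∀ t : Tm σ, Term σ ⟨s, S, t.mapAtoms π⟩ ↔
        Term σ ⟨s.map π.symm, S.mapAtoms π.symm, t⟩ := fun t => by
      constructor
      · intro ht
        simpa only [Tm.mapAtoms_symm_mapAtoms] using
          ht.mapAtoms hequiv π.symm (finite_support_symm hπ) hs
      · intro ht
        simpa [Stk.mapAtoms_mapAtoms, Stk.mapAtoms_id, Function.comp_def] using
          ht.mapAtoms hequiv π hπ hs'
    rw [key, key]
    refine h _ _ τ₁ hs' ?_ (hS.mapAtoms _)
    rw [Stk.atoms_mapAtoms]
    intro a ha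
    rcases Finset.mem_union.1 ha with ha | ha
    · have := hsub (Finset.mem_union_left _ (Finset.mem_image_of_mem π ha))
      simp only [List.mem_toFinset, List.mem_map] at this ⊢
      exact ⟨_, this, by simp⟩
    · obtain ⟨b, hb, rfl⟩ := Finset.mem_image.1 ha
      have := hsub (Finset.mem_union_right _ hb)
      simp only [List.mem_toFinset, List.mem_map] at this ⊢
      exact ⟨_, this, rfl⟩

theorem CtxEq.mapAtoms (hequiv : ObsEquivariant σ) (π : Equiv.Perm Atom)
    (hπ : {a : Atom | π a ≠ a}.Finite) (h : CtxEq σ Γ w e e' τ) :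
    CtxEq σ Γ (w.image π) (e.mapAtoms π) (e'.mapAtoms π) τ := by
  obtain ⟨ha, ht, ht', h⟩ := h
  refine ⟨?_, ht.mapAtoms _, ht'.mapAtoms _, fun w₁ vs hw hvs => ?_⟩
  · rw [Tm.atoms_mapAtoms, Tm.atoms_mapAtoms, ← Finset.image_union]
    exact Finset.image_subset_image ha
  · have := (h (w₁.image π.symm) (fun i => (vs i).mapAtoms π.symm) ?_ ?_).mapAtoms hequiv π hπ
    · simpa [Tm.mapAtoms_subst, Tm.mapAtoms_mapAtoms_symm, Finset.image_image] using this
    · intro a ha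
      exact Finset.mem_image.2 ⟨π a, hw (Finset.mem_image_of_mem π ha), by simp⟩
    · intro i τ₁ hi
      obtain ⟨h₁, h₂, h₃⟩ := hvs i τ₁ hi
      exact ⟨h₁.mapAtoms _, h₂.mapAtoms _, by
        rw [Tm.atoms_mapAtoms]; exact Finset.image_subset_image h₃⟩

/-! ### Closure properties of contextual equivalence -/

theorem OpEq.symm (h : OpEq σ w e e' τ) : OpEq σ w e' e τ :=
  ⟨Finset.union_comm e.atoms e'.atoms ▸ h.1, h.2.2.1, h.2.1,
    fun s S τ' h₁ h₂ h₃ => (h.2.2.2 s S τ' h₁ h₂ h₃).symm⟩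

theorem OpEq.trans (h : OpEq σ w e e' τ) (h' : OpEq σ w e' e'' τ) : OpEq σ w e e'' τ :=
  ⟨Finset.union_subset (Finset.union_subset_left h.1) (Finset.union_subset_right h'.1),
    h.2.1, h'.2.2.1,
    fun s S τ' h₁ h₂ h₃ => (h.2.2.2 s S τ' h₁ h₂ h₃).trans (h'.2.2.2 s S τ' h₁ h₂ h₃)⟩

theorem CtxEq.symm (h : CtxEq σ Γ w e e' τ) : CtxEq σ Γ w e' e τ :=
  ⟨Finset.union_comm e.atoms e'.atoms ▸ h.1, h.2.2.1, h.2.1,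
    fun w' vs hw hvs => (h.2.2.2 w' vs hw hvs).symm⟩

theorem CtxEq.trans (h : CtxEq σ Γ w e e' τ) (h' : CtxEq σ Γ w e' e'' τ) :
    CtxEq σ Γ w e e'' τ :=
  ⟨Finset.union_subset (Finset.union_subset_left h.1) (Finset.union_subset_right h'.1),
    h.2.1, h'.2.2.1,
    fun w' vs hw hvs => (h.2.2.2 w' vs hw hvs).trans (h'.2.2.2 w' vs hw hvs)⟩

theorem CtxEq.left (h : CtxEq σ Γ w e e' τ) : CtxEq σ Γ w e e τ := h.trans h.symm

theorem CtxEq.right (h : CtxEq σ Γ w e e' τ) : CtxEq σ Γ w e' e' τ := h.symm.trans h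

theorem CtxEq.mono (h : CtxEq σ Γ w e e' τ) (hw : w ⊆ w') : CtxEq σ Γ w' e e' τ :=
  ⟨h.1.trans hw, h.2.1, h.2.2.1, fun w₁ vs hw₁ hvs => h.2.2.2 w₁ vs (hw.trans hw₁) hvs⟩

theorem CtxEq.opEq (h : CtxEq σ [] w e e' τ) : OpEq σ w e e' τ := by
  have := h.2.2.2 w Tm.var subset_rfl (by intro i τ hi; simp at hi)
  rwa [Tm.subst_var, Tm.subst_var] at this

theorem OpEq.refl (ha : e.atoms ⊆ w) (ht : HasTy σ [] e τ) : OpEq σ w e e τ :=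
  ⟨by simpa using ha, ht, ht, fun _ _ _ _ _ _ => Iff.rfl⟩

theorem CtxEq.renV (h : CtxEq σ Γ w e e' τ) {r : ℕ → ℕ}
    (hr : ∀ i τ, Γ[i]? = some τ → Δ[r i]? = some τ) :
    CtxEq σ Δ w (e.renV r) (e'.renV r) τ := by
  obtain ⟨ha, ht, ht', h⟩ := h
  refine ⟨by simpa [Tm.atoms_renV] using ha, ht.renV hr, ht'.renV hr, fun w₁ vs hw hvs => ?_⟩
  rw [Tm.subst_renV, Tm.subst_renV]
  exact h w₁ _ hw fun i τ hi => hvs _ _ (hr i τ hi)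

/-- The substituted values are required to be contextually equivalent to themselves, which is
more than being well typed with atoms in `w`: a branch of a `case` on a constructor of another
data type is not typed and may mention variables outside the context. -/
theorem CtxEq.subst (h : CtxEq σ Γ w e e' τ) {ρ : ℕ → Tm σ} (hv : ∀ i, IsVal (ρ i))
    (hat : ∀ i, (ρ i).atoms ⊆ w)
    (hρ : ∀ i τ, Γ[i]? = some τ → CtxEq σ Δ w (ρ i) (ρ i) τ) :
    CtxEq σ Δ w (e.subst ρ) (e'.subst ρ) τ := by
  obtain ⟨ha, ht, ht', h⟩ := h
  have hty : ∀ i τ, Γ[i]? = some τ → IsVal (ρ i) ∧ HasTy σ Δ (ρ i) τ :=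
    fun i τ hi => ⟨hv i, (hρ i τ hi).2.1⟩
  refine ⟨?_, ht.subst hty, ht'.subst hty, fun w₁ vs hw hvs => ?_⟩
  · exact Finset.union_subset (Tm.atoms_subst _ (Finset.union_subset_left ha) hat)
      (Tm.atoms_subst _ (Finset.union_subset_right ha) hat)
  · rw [Tm.subst_subst, Tm.subst_subst]
    refine h w₁ _ hw fun i τ hi => ?_
    have hop := (hρ i τ hi).2.2.2 w₁ vs hw hvs
    exact ⟨(hv i).subst_of_hasTy (hty i τ hi).2 fun j τ hj => (hvs j τ hj).1, hop.2.1,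
      Finset.union_subset_left hop.1⟩

theorem CtxEq.var {i : ℕ} (h : Γ[i]? = some τ) :
    CtxEq σ Γ w (Tm.var i) (Tm.var i) τ :=
  ⟨by simp [Tm.atoms], .var _ _ _ h, .var _ _ _ h,
    fun _ vs _ hvs => OpEq.refl (hvs i τ h).2.2 (hvs i τ h).2.1⟩

theorem CtxEq.numeral (n : ℕ) :
    CtxEq σ Γ w (numeral σ n) (numeral σ n) (Ty.data σ.natD) :=
  ⟨by simp [atoms_numeral], hasTy_numeral n, hasTy_numeral n, fun _ vs _ _ => by
    rw [subst_numeral]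
    exact OpEq.refl (by simp [atoms_numeral]) (hasTy_numeral n)⟩

theorem CtxEq.atom {a : Atom} (ha : a ∈ w) :
    CtxEq σ Γ w (Tm.atom a) (Tm.atom a) Ty.atm :=
  ⟨by simpa [Tm.atoms] using ha, .atom, .atom, fun _ vs hw _ =>
    OpEq.refl (by simpa [Tm.atoms, Tm.subst] using hw ha) .atom⟩

theorem CtxEq.pair_refl {v v' : Tm σ} (h : CtxEq σ Γ w v v τ) (h' : CtxEq σ Γ w v' v' τ')
    (hv : IsVal v) (hv' : IsVal v') :
    CtxEq σ Γ w (Tm.pair v v') (Tm.pair v v') (Ty.prod τ τ') := by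
  have ht : HasTy σ Γ (Tm.pair v v') (Ty.prod τ τ') := .pair hv hv' h.2.1 h'.2.1
  refine ⟨?_, ht, ht, fun w₁ vs hw hvs => OpEq.refl ?_ ?_⟩
  · simpa [Tm.atoms] using Finset.union_subset (Finset.union_subset_left h.1)
      (Finset.union_subset_left h'.1)
  · exact Finset.union_subset (Finset.union_subset_left (h.2.2.2 w₁ vs hw hvs).1)
      (Finset.union_subset_left (h'.2.2.2 w₁ vs hw hvs).1)
  · exact ht.subst fun i τ hi => ⟨(hvs i τ hi).1, (hvs i τ hi).2.1⟩

end Equivariance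

/-! ### The Howe relation -/

section HoweRelation

variable {σ : Sig} {Γ Δ : List (Ty σ.D)} {w w' : Finset Atom} {e e' e'' v v' : Tm σ}
  {τ τ' : Ty σ.D}

theorem CompRef.mono {R R' : ExprRel σ} (hR : ∀ Γ w e e' τ, R Γ w e e' τ → R' Γ w e e' τ)
    (h : CompRef σ R Γ w e e' τ) : CompRef σ R' Γ w e e' τ := by
  cases h with
  | var _ _ _ h => exact .var _ _ _ h
  | unit => exact .unit
  | pair a b c d h₁ h₂ => exact .pair a b c d (hR _ _ _ _ _ h₁) (hR _ _ _ _ _ h₂)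
  | fn h => exact .fn (hR _ _ _ _ _ h)
  | con a b h => exact .con a b (hR _ _ _ _ _ h)
  | atom h => exact .atom h
  | bindv a b c d h₁ h₂ => exact .bindv a b c d (hR _ _ _ _ _ h₁) (hR _ _ _ _ _ h₂)
  | lett h₁ h₂ => exact .lett (hR _ _ _ _ _ h₁) (hR _ _ _ _ _ h₂)
  | fst a b h => exact .fst a b (hR _ _ _ _ _ h)
  | snd a b h => exact .snd a b (hR _ _ _ _ _ h)
  | app a b c d h₁ h₂ => exact .app a b c d (hR _ _ _ _ _ h₁) (hR _ _ _ _ _ h₂)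
  | case br br' a b h₁ h₂ =>
    exact .case br br' a b (hR _ _ _ _ _ h₁) fun c hc => hR _ _ _ _ _ (h₂ c hc)
  | fresh => exact .fresh
  | unbind a b h => exact .unbind a b (hR _ _ _ _ _ h)
  | obs o as as' a b h => exact .obs o as as' a b fun i => hR _ _ _ _ _ (h i)

theorem Howe.intro (h : CompRef σ (Howe σ) Γ w e e' τ) (hctx : CtxEq σ Γ w e' e'' τ) :
    Howe σ Γ w e e'' τ := fun _ hR =>
  hR _ _ _ _ _ ⟨e', h.mono fun _ _ _ _ _ hh => hh _ hR, hctx⟩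

/-- Structural induction on derivations of the Howe relation. -/
theorem Howe.induct {P : ExprRel σ}
    (hP : ∀ Γ w e e' e'' τ, CompRef σ P Γ w e e' τ →
      CompRef σ (Howe σ) Γ w e e' τ → CtxEq σ Γ w e' e'' τ → P Γ w e e'' τ)
    (h : Howe σ Γ w e e' τ) : P Γ w e e' τ := by
  refine (h (fun Γ w e e' τ => Howe σ Γ w e e' τ ∧ P Γ w e e' τ) ?_).2
  rintro Γ w a c τ ⟨b, hab, hbc⟩
  have h₁ := hab.mono (R' := Howe σ) fun _ _ _ _ _ h => h.1
  exact ⟨.intro h₁ hbc, hP _ _ _ _ _ _ (hab.mono fun _ _ _ _ _ h => h.2) h₁ hbc⟩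

theorem Howe.elim (h : Howe σ Γ w e e'' τ) :
    ∃ e', CompRef σ (Howe σ) Γ w e e' τ ∧ CtxEq σ Γ w e' e'' τ :=
  Howe.induct (P := fun Γ w e e'' τ =>
    ∃ e', CompRef σ (Howe σ) Γ w e e' τ ∧ CtxEq σ Γ w e' e'' τ)
    (fun _ _ _ _ _ _ _ h h' => ⟨_, h, h'⟩) h

theorem Howe.right (h : Howe σ Γ w e e' τ) : CtxEq σ Γ w e' e' τ :=
  let ⟨_, _, h⟩ := h.elim
  h.right

theorem Howe.atoms_right (h : Howe σ Γ w e e' τ) : e'.atoms ⊆ w :=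
  Finset.union_subset_left h.right.1

theorem Howe.trans (h : Howe σ Γ w e e' τ) (h' : CtxEq σ Γ w e' e'' τ) :
    Howe σ Γ w e e'' τ :=
  let ⟨_, h₁, h₂⟩ := h.elim
  .intro h₁ (h₂.trans h')

theorem Howe.var {i : ℕ} (h : Γ[i]? = some τ) : Howe σ Γ w (Tm.var i) (Tm.var i) τ :=
  .intro (.var _ _ _ h) (.var h)

theorem Howe.atom {a : Atom} (h : a ∈ w) : Howe σ Γ w (Tm.atom a) (Tm.atom a) Ty.atm :=
  .intro (.atom h) (.atom h)

theorem Howe.numeral (n : ℕ) :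
    Howe σ Γ w (numeral σ n) (numeral σ n) (Ty.data σ.natD) := by
  refine .intro ?_ (.numeral n)
  induction n with
  | zero =>
    have := CompRef.con (σ := σ) (R := Howe σ) (Γ := Γ) (w := w) (c := σ.zeroC) .unit .unit
      (by
        rw [σ.zeroArg]
        exact .intro .unit ⟨by simp [Tm.atoms], .unit, .unit,
          fun _ _ _ _ => OpEq.refl (by simp [Tm.atoms, Tm.subst]) .unit⟩)
    rwa [σ.zeroRes] at this
  | succ n ih =>
    have := CompRef.con (σ := σ) (R := Howe σ) (Γ := Γ) (w := w) (c := σ.succC)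
      (isVal_numeral n) (isVal_numeral n) (by rw [σ.succArg]; exact .intro ih (.numeral n))
    rwa [σ.succRes] at this

theorem Howe.renV (h : Howe σ Γ w e e' τ) {r : ℕ → ℕ}
    (hr : ∀ i τ, Γ[i]? = some τ → Δ[r i]? = some τ) :
    Howe σ Δ w (e.renV r) (e'.renV r) τ := by
  refine Howe.induct (P := fun Γ w e e' τ => ∀ Δ r,
    (∀ i τ, Γ[i]? = some τ → Δ[r i]? = some τ) → Howe σ Δ w (e.renV r) (e'.renV r) τ)
    ?_ h Δ r hr
  clear h hr
  intro Γ w e e' e'' τ h _ h' Δ r hr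
  refine .intro ?_ (h'.renV hr)
  cases h with
  | var _ _ _ h => exact .var _ _ _ (hr _ _ h)
  | unit => exact .unit
  | pair a b c d h₁ h₂ =>
    exact .pair (a.renV r) (b.renV r) (c.renV r) (d.renV r) (h₁ _ _ hr) (h₂ _ _ hr)
  | fn h => exact .fn (h _ _ (upr_lookup (upr_lookup hr _) _))
  | con a b h => exact .con (a.renV r) (b.renV r) (h _ _ hr)
  | atom h => exact .atom h
  | bindv a b c d h₁ h₂ =>
    exact .bindv (a.renV r) (b.renV r) (c.renV r) (d.renV r) (h₁ _ _ hr) (h₂ _ _ hr)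
  | lett h₁ h₂ => exact .lett (h₁ _ _ hr) (h₂ _ _ (upr_lookup hr _))
  | fst a b h => exact .fst (a.renV r) (b.renV r) (h _ _ hr)
  | snd a b h => exact .snd (a.renV r) (b.renV r) (h _ _ hr)
  | app a b c d h₁ h₂ =>
    exact .app (a.renV r) (b.renV r) (c.renV r) (d.renV r) (h₁ _ _ hr) (h₂ _ _ hr)
  | case br br' a b h₁ h₂ =>
    exact .case _ _ (a.renV r) (b.renV r) (h₁ _ _ hr)
      fun c hc => h₂ c hc _ _ (upr_lookup hr _)
  | fresh => exact .fresh
  | unbind a b h => exact .unbind (a.renV r) (b.renV r) (h _ _ hr)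
  | obs o as as' a b h =>
    exact .obs o _ _ (fun i => (a i).renV r) (fun i => (b i).renV r) fun i => h i _ _ hr

/-- `ρ` and `ρ'` substitute values for the variables of `Γ` that are Howe-related in `Δ`.
Values and, for `ρ'`, atoms in `w` are demanded at every index, also outside `Γ`, because untyped
branches of a `case` may mention such variables. -/
structure SubRel (σ : Sig) (Γ Δ : List (Ty σ.D)) (w : Finset Atom) (ρ ρ' : ℕ → Tm σ) :
    Prop where
  valL : ∀ i, IsVal (ρ i)
  valR : ∀ i, IsVal (ρ' i)
  atomsR : ∀ i, (ρ' i).atoms ⊆ w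
  rel : ∀ i τ, Γ[i]? = some τ → Howe σ Δ w (ρ i) (ρ' i) τ

theorem SubRel.ups {ρ ρ' : ℕ → Tm σ} (h : SubRel σ Γ Δ w ρ ρ') (τ₀ : Ty σ.D) :
    SubRel σ (τ₀ :: Γ) (τ₀ :: Δ) w (Tm.ups ρ) (Tm.ups ρ') where
  valL := IsVal.ups h.valL
  valR := IsVal.ups h.valR
  atomsR := Tm.atoms_ups h.atomsR
  rel i τ hi := by
    cases i with
    | zero => exact .var (by simpa using hi)
    | succ n => exact (h.rel n τ (by simpa using hi)).renV fun i τ hi => by simpa using hi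

/-- The Howe relation is substitutive. In the variable case the derivation for `ρ i` is spliced
in, using that the Howe relation absorbs contextual equivalence on the right. -/
theorem Howe.subst (h : Howe σ Γ w e e' τ) {ρ ρ' : ℕ → Tm σ} (hρ : SubRel σ Γ Δ w ρ ρ') :
    Howe σ Δ w (e.subst ρ) (e'.subst ρ') τ := by
  refine Howe.induct (P := fun Γ w e e' τ => ∀ Δ ρ ρ', SubRel σ Γ Δ w ρ ρ' →
    Howe σ Δ w (e.subst ρ) (e'.subst ρ') τ) ?_ h Δ ρ ρ' hρ
  clear h hρ
  intro Γ w e e' e'' τ h _ h' Δ ρ ρ' hρ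
  have h'' := h'.subst hρ.valR hρ.atomsR fun i τ hi => (hρ.rel i τ hi).right
  have L : ∀ {v : Tm σ}, IsVal v → IsVal (v.subst ρ) := fun h => h.subst hρ.valL
  have R : ∀ {v : Tm σ}, IsVal v → IsVal (v.subst ρ') := fun h => h.subst hρ.valR
  cases h with
  | var _ _ _ h => exact (hρ.rel _ _ h).trans h''
  | unit => exact .intro .unit h''
  | pair a b c d h₁ h₂ =>
    exact .intro (.pair (L a) (L b) (R c) (R d) (h₁ _ _ _ hρ) (h₂ _ _ _ hρ)) h''
  | fn h => exact .intro (.fn (h _ _ _ ((hρ.ups _).ups _))) h''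
  | con a b h => exact .intro (.con (L a) (R b) (h _ _ _ hρ)) h''
  | atom h => exact .intro (.atom h) h''
  | bindv a b c d h₁ h₂ =>
    exact .intro (.bindv (L a) (L b) (R c) (R d) (h₁ _ _ _ hρ) (h₂ _ _ _ hρ)) h''
  | lett h₁ h₂ => exact .intro (.lett (h₁ _ _ _ hρ) (h₂ _ _ _ (hρ.ups _))) h''
  | fst a b h => exact .intro (.fst (L a) (R b) (h _ _ _ hρ)) h''
  | snd a b h => exact .intro (.snd (L a) (R b) (h _ _ _ hρ)) h''
  | app a b c d h₁ h₂ =>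
    exact .intro (.app (L a) (L b) (R c) (R d) (h₁ _ _ _ hρ) (h₂ _ _ _ hρ)) h''
  | case br br' a b h₁ h₂ =>
    exact .intro (.case _ _ (L a) (R b) (h₁ _ _ _ hρ)
      fun c hc => h₂ c hc _ _ _ (hρ.ups _)) h''
  | fresh => exact .intro .fresh h''
  | unbind a b h => exact .intro (.unbind (L a) (R b) (h _ _ _ hρ)) h''
  | obs o as as' a b h =>
    exact .intro (.obs o _ _ (fun i => L (a i)) (fun i => R (b i)) fun i => h i _ _ _ hρ) h''

theorem Howe.subst1 (h : Howe σ (τ :: Γ) w e e' τ') (hv : IsVal v) (hv' : IsVal v')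
    (hvv : Howe σ Γ w v v' τ) : Howe σ Γ w (e.subst1 v) (e'.subst1 v') τ' := by
  refine h.subst ⟨?_, ?_, ?_, ?_⟩
  · rintro (_ | i); exacts [hv, .var]
  · rintro (_ | i); exacts [hv', .var]
  · rintro (_ | i); exacts [hvv.atoms_right, Finset.empty_subset _]
  · rintro (_ | i) τ₁ hi
    · obtain rfl : τ = τ₁ := by simpa using hi
      exact hvv
    · exact .var (by simpa using hi)

theorem Howe.subst2 {u u' : Tm σ} {τ₀ : Ty σ.D} (h : Howe σ (τ :: τ₀ :: Γ) w e e' τ')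
    (hv : IsVal v) (hv' : IsVal v') (hu : IsVal u) (hu' : IsVal u')
    (hvv : Howe σ Γ w v v' τ) (huu : Howe σ Γ w u u' τ₀) :
    Howe σ Γ w (e.subst2 v u) (e'.subst2 v' u') τ' := by
  refine h.subst ⟨?_, ?_, ?_, ?_⟩
  · rintro (_ | _ | i); exacts [hv, hu, .var]
  · rintro (_ | _ | i); exacts [hv', hu', .var]
  · rintro (_ | _ | i); exacts [hvv.atoms_right, huu.atoms_right, Finset.empty_subset _]
  · rintro (_ | _ | i) τ₁ hi
    · obtain rfl : τ = τ₁ := by simpa using hi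
      exact hvv
    · obtain rfl : τ₀ = τ₁ := by simpa using hi
      exact huu
    · exact .var (by simpa using hi)

/-- Equivariance and world weakening of the Howe relation. On the left any function `f` that
agrees with `π` on `w` may be applied: only untyped branches of a `case` can contain atoms
outside `w`, and the relation does not constrain those. -/
theorem Howe.mapAtoms (hequiv : ObsEquivariant σ) {π : Equiv.Perm Atom}
    (hπ : {a : Atom | π a ≠ a}.Finite) {f : Atom → Atom} (h : Howe σ Γ w e e' τ)
    (hf : ∀ a ∈ w, f a = π a) (hw : w.image π ⊆ w') :
    Howe σ Γ w' (e.mapAtoms f) (e'.mapAtoms π) τ := by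
  refine Howe.induct (P := fun Γ w e e' τ => (∀ a ∈ w, f a = π a) → w.image π ⊆ w' →
    Howe σ Γ w' (e.mapAtoms f) (e'.mapAtoms π) τ) ?_ h hf hw
  clear h hf hw
  intro Γ w e e' e'' τ h _ h' hf hw
  refine .intro ?_ ((h'.mapAtoms hequiv π hπ).mono hw)
  cases h with
  | var _ _ _ h => exact .var _ _ _ h
  | unit => exact .unit
  | pair a b c d h₁ h₂ =>
    exact .pair (a.mapAtoms _) (b.mapAtoms _) (c.mapAtoms _) (d.mapAtoms _)
      (h₁ hf hw) (h₂ hf hw)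
  | fn h => exact .fn (h hf hw)
  | con a b h => exact .con (a.mapAtoms _) (b.mapAtoms _) (h hf hw)
  | atom h =>
    simp only [Tm.mapAtoms, hf _ h]
    exact .atom (hw (Finset.mem_image_of_mem π h))
  | bindv a b c d h₁ h₂ =>
    exact .bindv (a.mapAtoms _) (b.mapAtoms _) (c.mapAtoms _) (d.mapAtoms _)
      (h₁ hf hw) (h₂ hf hw)
  | lett h₁ h₂ => exact .lett (h₁ hf hw) (h₂ hf hw)
  | fst a b h => exact .fst (a.mapAtoms _) (b.mapAtoms _) (h hf hw)
  | snd a b h => exact .snd (a.mapAtoms _) (b.mapAtoms _) (h hf hw)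
  | app a b c d h₁ h₂ =>
    exact .app (a.mapAtoms _) (b.mapAtoms _) (c.mapAtoms _) (d.mapAtoms _)
      (h₁ hf hw) (h₂ hf hw)
  | case br br' a b h₁ h₂ =>
    exact .case _ _ (a.mapAtoms _) (b.mapAtoms _) (h₁ hf hw) fun c hc => h₂ c hc hf hw
  | fresh => exact .fresh
  | unbind a b h => exact .unbind (a.mapAtoms _) (b.mapAtoms _) (h hf hw)
  | obs o as as' a b h =>
    exact .obs o _ _ (fun i => (a i).mapAtoms _) (fun i => (b i).mapAtoms _)
      fun i => h i hf hw

theorem Howe.mono (hequiv : ObsEquivariant σ) (h : Howe σ Γ w e e' τ) (hw : w ⊆ w') :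
    Howe σ Γ w' e e' τ := by
  have := h.mapAtoms hequiv (π := Equiv.refl Atom) (f := fun a => a) (w' := w') (by simp)
    (fun _ _ => rfl) (by simpa using hw)
  rw [Tm.mapAtoms_id] at this
  exact Tm.mapAtoms_id e' ▸ this

/-- Renaming `a` to an atom `a'` outside the world, which on terms over `w` is the same as
swapping `a` and `a'`. -/
theorem Howe.renameAtom (hequiv : ObsEquivariant σ) (h : Howe σ Γ w e e' τ) {a a' : Atom}
    (ha' : a' ∉ w) (hw : insert a' w ⊆ w') :
    Howe σ Γ w' (e.renameAtom a a') (e'.renameAtom a a') τ := by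
  have hagree : ∀ b ∈ w, (if b = a then a' else b) = Equiv.swap a a' b := fun b hb => by
    have : b ≠ a' := fun h => ha' (h ▸ hb)
    simp [Equiv.swap_apply_def, this]
  have hfin : {b : Atom | Equiv.swap a a' b ≠ b}.Finite :=
    (Set.toFinite {a, a'}).subset fun b hb => by
      by_contra hne
      simp only [Set.mem_insert_iff, Set.mem_singleton_iff, not_or] at hne
      exact hb (Equiv.swap_apply_of_ne_of_ne hne.1 hne.2)
  have := h.mapAtoms hequiv (w' := w') hfin hagree ?_
  · rwa [← Tm.mapAtoms_congr e' fun b hb => hagree b (h.atoms_right hb)] at this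
  · intro b hb
    obtain ⟨c, hc, rfl⟩ := Finset.mem_image.1 hb
    rw [← hagree c hc]
    split_ifs
    · exact hw (Finset.mem_insert_self _ _)
    · exact hw (Finset.mem_insert_of_mem hc)

theorem CompRef.isVal_right {R : ExprRel σ} (h : CompRef σ R Γ w e e' τ) (he : IsVal e) :
    IsVal e' := by
  cases he <;> cases h <;> constructor <;> assumption

theorem StkRef.hasTy_right {S S' : Stk σ} (h : StkRef σ (Howe σ) Γ w S S' τ τ') :
    HasTyStk σ Γ S' τ τ' := by
  induction h with
  | id => exact .id
  | cons h _ ih => exact .cons h.right.2.1 ih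

theorem StkRef.atoms_right {S S' : Stk σ} (h : StkRef σ (Howe σ) Γ w S S' τ τ') :
    S'.atoms ⊆ w := by
  induction h with
  | id => exact Finset.empty_subset _
  | cons h _ ih => exact Finset.union_subset ih h.atoms_right

theorem StkRef.mono (hequiv : ObsEquivariant σ) {S S' : Stk σ}
    (h : StkRef σ (Howe σ) Γ w S S' τ τ') (hw : w ⊆ w') :
    StkRef σ (Howe σ) Γ w' S S' τ τ' := by
  induction h with
  | id => exact .id
  | cons h _ ih => exact .cons (h.mono hequiv hw) (ih hw)

/-! ### The key lemma -/

theorem Term.of_step {c c' : Config σ} (h : Step σ c c') (h' : Term σ c') : Term σ c :=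
  let ⟨n, hn⟩ := h'
  ⟨n + 1, .step h hn⟩

theorem Term.of_pop {s : List Atom} {S : Stk σ} (hv : IsVal v)
    (h : Term σ ⟨s, .cons S e, v⟩) : Term σ ⟨s, S, e.subst1 v⟩ := by
  obtain ⟨_, h⟩ := h
  cases h with
  | step hs ht =>
    cases hs with
    | pop _ => exact ⟨_, ht⟩
    | _ => cases hv

/-- Contextually equivalent values may be exchanged inside a one-hole expression `F`: push `F` as
a frame and apply operational equivalence at the extended stack. -/
theorem Term.exchange {F : Tm σ} {s : List Atom} {S : Stk σ} {τ₀ : Ty σ.D}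
    (hvv : CtxEq σ [] w v v' τ) (hv : IsVal v) (hv' : IsVal v')
    (hF : HasTy σ [τ] F τ₀) (hFa : F.atoms ⊆ w) (hS : HasTyStk σ [] S τ₀ τ')
    (hSa : S.atoms ⊆ w) (hs : s.toFinset = w) (hnd : s.Nodup)
    (h : Term σ ⟨s, S, F.subst1 v⟩) : Term σ ⟨s, S, F.subst1 v'⟩ := by
  refine Term.of_pop hv' ((hvv.opEq.2.2.2 s (.cons S F) τ' hnd ?_ (.cons hF hS)).1
    (Term.of_step (.pop hv) h))
  rw [hs]
  exact Finset.union_subset subset_rfl (Finset.union_subset hSa hFa)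

theorem Term.exchange_obs {s : List Atom} {S : Stk σ} (o : σ.O)
    {as as' : Fin (σ.arity o) → Tm σ} (has : ∀ i, CtxEq σ [] w (as i) (as' i) Ty.atm)
    (hv : ∀ i, IsVal (as i)) (hv' : ∀ i, IsVal (as' i))
    (hS : HasTyStk σ [] S (Ty.data σ.natD) τ')
    (hSa : S.atoms ⊆ w) (hs : s.toFinset = w) (hnd : s.Nodup)
    (h : Term σ ⟨s, S, .obs o as⟩) : Term σ ⟨s, S, .obs o as'⟩ := by
  classical
  -- the arguments are exchanged one at a time; `T` collects those already exchanged
  have key : ∀ T : Finset (Fin (σ.arity o)),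
      Term σ ⟨s, S, .obs o fun i => if i ∈ T then as' i else as i⟩ := by
    intro T
    induction T using Finset.induction_on with
    | empty => simpa using h
    | insert i T hi ih =>
      have hmix : ∀ j, IsVal (if j ∈ T then as' j else as j) ∧
          HasTy σ [] (if j ∈ T then as' j else as j) Ty.atm ∧
          (if j ∈ T then as' j else as j).atoms ⊆ w := fun j => by
        split_ifs
        · exact ⟨hv' j, (has j).2.2.1, Finset.union_subset_right (has j).1⟩
        · exact ⟨hv j, (has j).2.1, Finset.union_subset_left (has j).1⟩
      have hplug : ∀ u : Tm σ, (Tm.obs o fun j => if j = i then Tm.var 0 else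
          (if j ∈ T then as' j else as j).renV Nat.succ).subst1 u =
          .obs o fun j => if j = i then u else if j ∈ T then as' j else as j := fun u => by
        simp only [Tm.subst1, Tm.subst]
        congr 1; funext j
        by_cases hj : j = i
        · simp [hj, Tm.subst, Tm.cons1]
        · simp only [hj, if_false]; exact Tm.subst1_renV_succ _ _
      have := Term.exchange (F := Tm.obs o fun j => if j = i then Tm.var 0 else
          (if j ∈ T then as' j else as j).renV Nat.succ) (has i) (hv i) (hv' i)
          (.obs o _ (fun j => ?_) fun j => ?_) ?_ hS hSa hs hnd ?_
      · rw [hplug] at this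
        convert this using 4 with j
        by_cases hj : j = i <;> simp [hj]
      · split_ifs
        · exact .var
        all_goals exact IsVal.renV (by first | exact hv' j | exact hv j) _
      · by_cases hj : j = i
        · simp only [hj, if_true]; exact .var _ _ _ rfl
        · simp only [hj, if_false]; exact (hmix j).2.1.weaken
      · simp only [Tm.atoms, Finset.biUnion_subset_iff_forall_subset]
        intro j _
        by_cases hj : j = i
        · simp [hj, Tm.atoms]
        · simp only [hj, if_false, Tm.atoms_renV]; exact (hmix j).2.2
      · rw [hplug]
        convert ih using 4 with j
        by_cases hj : j = i <;> simp [hj, hi]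
  simpa using key Finset.univ

end HoweRelation

/-- Key lemma for the CIU theorem. -/
theorem howe_key_lemma (σ : Sig) (hequiv : ObsEquivariant σ)
    (n : ℕ) (w : Finset Atom) (S S' : Stk σ) (τ τ' : Ty σ.D)
    (e e' : Tm σ) (s : List Atom)
    (hS : StkRef σ (Howe σ) [] w S S' τ τ')
    (he : Howe σ [] w e e' τ)
    (hs : s.toFinset = w) (hnd : s.Nodup)
    (ht : TermN σ ⟨s, S, e⟩ n) :
    Term σ ⟨s, S', e'⟩ := by
  induction n generalizing w S S' τ e e' s with
  | zero =>
    obtain ⟨b, hb, hbe⟩ := he.elim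
    cases ht with
    | val hv =>
    cases hS
    exact (hbe.opEq.2.2.2 s .id _ hnd (by simp [hs, Stk.atoms]) .id).1
      ⟨0, .val (hb.isVal_right hv)⟩
  | succ n ih =>
    obtain ⟨b, hb, hbe⟩ := he.elim
    have hSty := hS.hasTy_right
    have hSa := hS.atoms_right
    -- the final contextual equivalence of the Howe rule is discharged at the stack `S'`
    refine (hbe.opEq.2.2.2 s S' _ hnd (by rw [hs]; exact Finset.union_subset subset_rfl hSa)
      hSty).1 ?_
    have fresh_world : ∀ {a'}, a' ∉ s → (s ++ [a']).toFinset = insert a' w ∧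
        (s ++ [a']).Nodup := fun {a'} h => by
      refine ⟨by ext; simp [← hs], ?_⟩
      rw [List.nodup_append_comm]; simpa using ⟨h, hnd⟩
    cases ht with
    | step hstep ht =>
    cases hstep with
    | pop hv =>
      cases hS with
      | cons hF hS =>
      have hv' := hb.isVal_right hv
      exact Term.of_step (.pop hv')
        (ih _ _ _ _ _ _ _ hS (hF.subst1 hv hv' (.intro hb hbe.left)) hs hnd ht)
    | lett =>
      cases hb with
      | lett h₁ h₂ =>
      exact Term.of_step .lett (ih _ _ _ _ _ _ _ (.cons h₂ hS) h₁ hs hnd ht)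
    | case br hv =>
      cases hb with
      | case _ br' hval hu' hu hbr =>
      obtain ⟨u, hcu, huu⟩ := hu.elim
      have hvu := hcu.isVal_right hval
      have hba := Finset.union_subset_right (Finset.union_subset_left hbe.1)
      have hplug : ∀ x : Tm σ, (Tm.case (.var 0) fun c => (br' c).renV (upr Nat.succ)).subst1 x
          = .case x br' := fun x => by
        simp [Tm.subst1, Tm.subst, Tm.cons1, Tm.subst1_renV_upr_succ]
      rw [← hplug]
      refine Term.exchange huu hvu hu' (.case _ .var (.var _ _ _ rfl) fun c hc =>
        (hbr c hc).right.2.1.renV (upr_lookup (by simp) _)) ?_ hSty hSa hs hnd ?_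
      · simpa [Tm.atoms, Tm.atoms_renV] using hba
      · rw [hplug]
        cases hcu with
        | con _ hv'' hvv =>
        exact Term.of_step (.case _ hv'')
          (ih _ _ _ _ _ _ _ hS ((hbr _ rfl).subst1 hv hv'' hvv) hs hnd ht)
    | fst h₁ h₂ =>
      cases hb with
      | fst hval hu' hu =>
      obtain ⟨u, hcu, huu⟩ := hu.elim
      refine Term.exchange (F := .fst (.var 0)) huu (hcu.isVal_right hval) hu'
        (.fst .var (.var _ _ _ rfl)) (by simp [Tm.atoms]) hSty hSa hs hnd ?_
      cases hcu with
      | pair _ _ k₁ k₂ hh₁ hh₂ =>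
      exact Term.of_step (.fst k₁ k₂) (ih _ _ _ _ _ _ _ hS hh₁ hs hnd ht)
    | snd h₁ h₂ =>
      cases hb with
      | snd hval hu' hu =>
      obtain ⟨u, hcu, huu⟩ := hu.elim
      refine Term.exchange (F := .snd (.var 0)) huu (hcu.isVal_right hval) hu'
        (.snd .var (.var _ _ _ rfl)) (by simp [Tm.atoms]) hSty hSa hs hnd ?_
      cases hcu with
      | pair _ _ k₁ k₂ hh₁ hh₂ =>
      exact Term.of_step (.snd k₁ k₂) (ih _ _ _ _ _ _ _ hS hh₂ hs hnd ht)
    | app hv =>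
      cases hb with
      | @app _ _ f' v' _ _ _ _ hval _ hf' hv' hf hvv =>
      obtain ⟨u, hcu, huu⟩ := hf.elim
      have hplug : ∀ x : Tm σ, (Tm.app (.var 0) (v'.renV Nat.succ)).subst1 x
          = .app x v' := fun x => by
        simp only [Tm.subst1, Tm.subst, Tm.cons1]
        exact congrArg _ (Tm.subst1_renV_succ _ _)
      rw [← hplug]
      refine Term.exchange huu (hcu.isVal_right hval) hf'
        (.app .var (hv'.renV _) (.var _ _ _ rfl) hvv.right.2.1.weaken) ?_ hSty hSa hs hnd ?_
      · simpa [Tm.atoms, Tm.atoms_renV] using hvv.atoms_right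
      · rw [hplug]
        have hself := Howe.intro hcu huu.left
        cases hcu with
        | fn hbody =>
        exact Term.of_step (.app hv')
          (ih _ _ _ _ _ _ _ hS (hbody.subst2 hv hv' .fn .fn hvv hself) hs hnd ht)
    | @fresh _ a' _ ha =>
      cases hb
      obtain ⟨hw, hnd'⟩ := fresh_world ha
      exact Term.of_step (.fresh ha) (ih _ _ _ _ _ _ _
        (hS.mono hequiv (Finset.subset_insert _ _)) (.atom (Finset.mem_insert_self _ _))
        hw hnd' ht)
    | @unbind _ a' v _ a ha hv =>
      obtain ⟨hw, hnd'⟩ := fresh_world ha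
      have ha' : a' ∉ w := by simpa [← hs] using ha
      cases hb with
      | unbind hval hu' hu =>
      obtain ⟨u, hcu, huu⟩ := hu.elim
      refine Term.exchange (F := .unbind (.var 0)) huu (hcu.isVal_right hval) hu'
        (.unbind .var (.var _ _ _ rfl)) (by simp [Tm.atoms]) hSty hSa hs hnd ?_
      cases hcu with
      | @bindv _ _ x v' _ _ _ _ _ kx kv' hx hvv =>
      obtain ⟨y, hay, hyx⟩ := hx.elim
      cases hay with
      | atom haw =>
      -- the name `x` on the right is a value equivalent to the atom `a`, so `a` may replace it
      have hplug : ∀ y : Tm σ, (Tm.unbind (.bindv (.var 0) (v'.renV Nat.succ))).subst1 y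
          = .unbind (.bindv y v') := fun y => by
        simp only [Tm.subst1, Tm.subst, Tm.cons1]
        exact congrArg (fun z => Tm.unbind (.bindv y z)) (Tm.subst1_renV_succ _ _)
      change Term σ ⟨s, S', .unbind (.bindv x v')⟩
      rw [← hplug]
      refine Term.exchange hyx .atom kx
        (.unbind (.bindv .var (kv'.renV _)) (.bindv .var (kv'.renV _) (.var _ _ _ rfl)
          hvv.right.2.1.weaken)) ?_ hSty hSa hs hnd ?_
      · simpa [Tm.atoms, Tm.atoms_renV] using hvv.atoms_right
      · rw [hplug]
        have hren := hvv.renameAtom hequiv (a := a) ha' subset_rfl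
        have hat : Howe σ [] (insert a' w) (.atom a') (.atom a') .atm :=
          .atom (Finset.mem_insert_self _ _)
        refine Term.of_step (.unbind ha kv') (ih _ _ _ _ _ _ _
          (hS.mono hequiv (Finset.subset_insert _ _)) ?_ hw hnd' ht)
        exact .intro (.pair .atom (hv.mapAtoms _) .atom (kv'.mapAtoms _) hat hren)
          (.pair_refl hat.right hren.right .atom (kv'.mapAtoms _))
    | obs o as has =>
      cases hb with
      | obs _ _ args' h₁ h₂ h₃ =>
      refine Term.exchange_obs o (as := fun i => .atom (as i)) (fun i => ?_)
        (fun _ => .atom) h₂ hSty hSa hs hnd ?_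
      · obtain ⟨y, hy, hyx⟩ := (h₃ i).elim
        cases hy
        exact hyx
      · exact Term.of_step (.obs o as has) (ih _ _ _ _ _ _ _ hS (.numeral _) hs hnd ht)
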